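/- arXiv:2003.01449 — 3 statements merged into one kernel-verified Lean document; each statement's English description precedes it below -/
import Mathlib

section
/- (Long-distance Green function estimate.) For every integer N ≥ 3 and every s with 0 < s < 1, there exist constants R₂ > 0, C₂ > 0 and C₂' > 0, depending only on N and s, such that C₂ · e^{-(N-1)r} r^{s-1} ≤ F_{N,s}(r) ≤ C₂' · e^{-(N-1)r} r^{s-1} for all r ≥ R₂. -/
open Real MeasureTheory Set Filter

/-- The explicit function comparable to the heat kernel of hyperbolic space `ℍ^N`
at geodesic distance `r`. -/
noncomputable def hN (N : ℕ) (t r : ℝ) : ℝ :=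
  (4 * π * t) ^ (-(N : ℝ) / 2) *
    Real.exp (-(((N : ℝ) - 1) ^ 2 * t) / 4 - ((N : ℝ) - 1) * r / 2 - r ^ 2 / (4 * t)) *
    (1 + r + t) ^ (((N : ℝ) - 3) / 2) * (1 + r)

/-- `F N s r = ∫₀^∞ h_N(t,r) t^{s-1} dt`, comparable to the Green function of
`(-Δ_{ℍ^N})^s` at geodesic distance `r`. -/
noncomputable def F (N : ℕ) (s r : ℝ) : ℝ :=
  ∫ t in Ioi (0 : ℝ), hN N t r * t ^ (s - 1)

/-!
With `a = N - 1`, the exponent of `hN N t r` equals `-a r - (a t - r)² / (4 t)`. Substituting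
`t = r u` turns it into `-a r - r g(u)²`, where `g(u) = (a u - 1) / (2 √u)` increases on `(0, ∞)`
and vanishes at `u = 1 / a`. For `r ≥ 1` the remaining factors are, up to constants, a power of
`r` times the amplitude `u ^ (s - 1 - N / 2) * (1 + u) ^ ((N - 3) / 2)`, so Laplace's method at
the minimum `u = 1 / a` contributes a factor `1 / √r`. The upper bound comes from the change of
variables `v = g(u)`, since the amplitude times `exp (-g² / 2)` is dominated by `g'`; the lower
bound comes from the interval of length `1 / √r` to the right of `1 / a`.
-/

section PowerBounds

lemma rpow_mem_Icc_rpow_abs {K x : ℝ} (hx : x ∈ Icc 1 K) (p : ℝ) :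
    x ^ p ∈ Icc (K ^ (-|p|)) (K ^ |p|) := by
  have hx0 : 0 < x := one_pos.trans_le hx.1
  constructor
  · calc K ^ (-|p|) ≤ x ^ (-|p|) :=
          rpow_le_rpow_of_nonpos hx0 hx.2 (neg_nonpos.2 (abs_nonneg p))
      _ ≤ x ^ p := rpow_le_rpow_of_exponent_le hx.1 (neg_abs_le p)
  · calc x ^ p ≤ x ^ |p| := rpow_le_rpow_of_exponent_le hx.1 (le_abs_self p)
      _ ≤ K ^ |p| := rpow_le_rpow hx0.le hx.2 (abs_nonneg p)

variable {α β : ℝ}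

lemma exists_rpow_le_mul_exp_add_inv (hα : 0 < α) (hβ : 0 < β) (p : ℝ) :
    ∃ C ≥ 0, ∀ x > 0, x ^ p ≤ C * exp (α * x + β * x⁻¹) := by
  have of_nonneg {c q : ℝ} (hc : 0 < c) (hq : 0 ≤ q) {x : ℝ} (hx : 0 < x) :
      x ^ q ≤ (q / c) ^ q * exp (c * x) := by
    simpa only [abs_of_pos hx, abs_of_pos hc] using
      ProbabilityTheory.rpow_abs_le_mul_exp_abs x hq hc.ne'
  rcases le_total 0 p with hp | hp
  · refine ⟨(p / α) ^ p, by positivity, fun x hx ↦ (of_nonneg hα hp hx).trans ?_⟩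
    gcongr
    exact le_add_of_nonneg_right (by positivity)
  · have hp' : 0 ≤ -p := neg_nonneg.2 hp
    refine ⟨(-p / β) ^ (-p), by positivity, fun x hx ↦ ?_⟩
    rw [← neg_neg p, rpow_neg hx.le, ← inv_rpow hx.le, neg_neg]
    refine (of_nonneg hβ hp' (inv_pos.2 hx)).trans ?_
    gcongr
    exact le_add_of_nonneg_left (by positivity)

lemma exists_rpow_mul_one_add_rpow_le_mul_exp (hα : 0 < α) (hβ : 0 < β) (b p : ℝ) :
    ∃ C ≥ 0, ∀ x > 0, x ^ b * (1 + x) ^ p ≤ C * exp (α * x + β * x⁻¹) := by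
  obtain ⟨C, hC, hx_le⟩ := exists_rpow_le_mul_exp_add_inv (half_pos hα) (half_pos hβ) b
  obtain ⟨D, hD, hadd_le⟩ := exists_rpow_le_mul_exp_add_inv (half_pos hα) (half_pos hβ) p
  refine ⟨C * (D * exp (α / 2)), by positivity, fun x hx ↦ ?_⟩
  have inv_add_le : (1 + x)⁻¹ ≤ x⁻¹ := by gcongr; linarith
  calc x ^ b * (1 + x) ^ p
      ≤ (C * exp (α / 2 * x + β / 2 * x⁻¹)) *
          (D * exp (α / 2 * (1 + x) + β / 2 * (1 + x)⁻¹)) := by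
        gcongr
        exacts [hx_le x hx, hadd_le (1 + x) (by positivity)]
    _ ≤ (C * exp (α / 2 * x + β / 2 * x⁻¹)) * (D * exp (α / 2 * (1 + x) + β / 2 * x⁻¹)) := by
        gcongr
    _ = C * (D * exp (α / 2)) * exp (α * x + β * x⁻¹) := by
        rw [show α / 2 * (1 + x) + β / 2 * x⁻¹ = α / 2 + (α / 2 * x + β / 2 * x⁻¹) by ring,
          show α * x + β * x⁻¹ = (α / 2 * x + β / 2 * x⁻¹) + (α / 2 * x + β / 2 * x⁻¹) by ring,
          exp_add (α / 2), exp_add (α / 2 * x + β / 2 * x⁻¹)]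
        ring

end PowerBounds

lemma setIntegral_mul_mem_Icc {X : Type*} [MeasurableSpace X] {μ : Measure X} {S : Set X}
    {f w : X → ℝ} {m M : ℝ} (hS : MeasurableSet S) (hf : IntegrableOn f S μ)
    (hf0 : ∀ x ∈ S, 0 ≤ f x) (hwm : AEStronglyMeasurable w (μ.restrict S))
    (hw : ∀ x ∈ S, w x ∈ Icc m M) :
    ∫ x in S, f x * w x ∂μ ∈ Icc (m * ∫ x in S, f x ∂μ) (M * ∫ x in S, f x ∂μ) := by
  have hint : IntegrableOn (fun x ↦ f x * w x) S μ :=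
    hf.mul_bdd (c := max |m| |M|) hwm <| ae_restrict_of_forall_mem hS fun x hx ↦
      abs_le_max_abs_abs (hw x hx).1 (hw x hx).2
  rw [mul_comm m, mul_comm M, ← integral_mul_const, ← integral_mul_const]
  exact ⟨setIntegral_mono_on (hf.mul_const m) hint hS fun x hx ↦
      mul_le_mul_of_nonneg_left (hw x hx).1 (hf0 x hx),
    setIntegral_mono_on hint (hf.mul_const M) hS fun x hx ↦
      mul_le_mul_of_nonneg_left (hw x hx).2 (hf0 x hx)⟩

section Laplace

variable {S : Set ℝ} {A g g' : ℝ → ℝ} {b c C L r x₀ : ℝ}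

lemma integrableOn_abs_deriv_mul_exp_neg_mul_sq (hb : 0 < b) (hS : MeasurableSet S)
    (hg : ∀ x ∈ S, HasDerivWithinAt g (g' x) S x) (hinj : InjOn g S) :
    IntegrableOn (fun x ↦ |g' x| * exp (-b * g x ^ 2)) S :=
  (integrableOn_image_iff_integrableOn_abs_deriv_smul hS hg hinj fun y ↦ exp (-b * y ^ 2)).1
    (integrable_exp_neg_mul_sq hb).integrableOn

lemma setIntegral_abs_deriv_mul_exp_neg_mul_sq_le (hb : 0 < b) (hS : MeasurableSet S)
    (hg : ∀ x ∈ S, HasDerivWithinAt g (g' x) S x) (hinj : InjOn g S) :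
    ∫ x in S, |g' x| * exp (-b * g x ^ 2) ≤ √(π / b) :=
  calc ∫ x in S, |g' x| * exp (-b * g x ^ 2)
      = ∫ y in g '' S, exp (-b * y ^ 2) :=
        (integral_image_eq_integral_abs_deriv_smul hS hg hinj fun y ↦ exp (-b * y ^ 2)).symm
    _ ≤ ∫ y, exp (-b * y ^ 2) :=
        setIntegral_le_integral (integrable_exp_neg_mul_sq hb) (.of_forall fun _ ↦ (exp_pos _).le)
    _ = √(π / b) := integral_gaussian b

lemma mul_exp_neg_mul_sq_le_of_dominated {A₀ d y : ℝ} (hr : 1 ≤ r) (hA : 0 ≤ A₀)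
    (hdom : A₀ * exp (-(y ^ 2 / 2)) ≤ C * d) :
    A₀ * exp (-r * y ^ 2) ≤ C * (d * exp (-(r / 2) * y ^ 2)) :=
  calc A₀ * exp (-r * y ^ 2)
      ≤ A₀ * exp (-(y ^ 2 / 2) + -(r / 2) * y ^ 2) := by
        gcongr
        nlinarith [sq_nonneg y]
    _ = A₀ * exp (-(y ^ 2 / 2)) * exp (-(r / 2) * y ^ 2) := by rw [exp_add, mul_assoc]
    _ ≤ C * d * exp (-(r / 2) * y ^ 2) := by gcongr
    _ = C * (d * exp (-(r / 2) * y ^ 2)) := mul_assoc _ _ _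

lemma integrableOn_mul_exp_neg_mul_sq (hr : 1 ≤ r) (hS : MeasurableSet S)
    (hg : ∀ x ∈ S, HasDerivWithinAt g (g' x) S x) (hinj : InjOn g S) (hAc : ContinuousOn A S)
    (hA : ∀ x ∈ S, 0 ≤ A x) (hdom : ∀ x ∈ S, A x * exp (-(g x ^ 2 / 2)) ≤ C * |g' x|) :
    IntegrableOn (fun x ↦ A x * exp (-r * g x ^ 2)) S := by
  have hgc : ContinuousOn g S := fun x hx ↦ (hg x hx).continuousWithinAt
  refine Integrable.mono' ((integrableOn_abs_deriv_mul_exp_neg_mul_sq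
    (by linarith : 0 < r / 2) hS hg hinj).const_mul C)
    (ContinuousOn.aestronglyMeasurable (by fun_prop) hS) ?_
  filter_upwards [ae_restrict_mem hS] with x hx
  rw [norm_of_nonneg (mul_nonneg (hA x hx) (exp_pos _).le)]
  exact mul_exp_neg_mul_sq_le_of_dominated hr (hA x hx) (hdom x hx)

lemma setIntegral_mul_exp_neg_mul_sq_le (hr : 1 ≤ r) (hS : MeasurableSet S)
    (hg : ∀ x ∈ S, HasDerivWithinAt g (g' x) S x) (hinj : InjOn g S) (hC : 0 ≤ C)
    (hA : ∀ x ∈ S, 0 ≤ A x) (hdom : ∀ x ∈ S, A x * exp (-(g x ^ 2 / 2)) ≤ C * |g' x|) :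
    ∫ x in S, A x * exp (-r * g x ^ 2) ≤ C * √(2 * π) / √r := by
  have hr2 : 0 < r / 2 := by linarith
  calc ∫ x in S, A x * exp (-r * g x ^ 2)
      ≤ ∫ x in S, C * (|g' x| * exp (-(r / 2) * g x ^ 2)) := by
        refine integral_mono_of_nonneg ?_
          ((integrableOn_abs_deriv_mul_exp_neg_mul_sq hr2 hS hg hinj).const_mul C) ?_
        · filter_upwards [ae_restrict_mem hS] with x hx
          exact mul_nonneg (hA x hx) (exp_pos _).le
        · filter_upwards [ae_restrict_mem hS] with x hx
          exact mul_exp_neg_mul_sq_le_of_dominated hr (hA x hx) (hdom x hx)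
    _ = C * ∫ x in S, |g' x| * exp (-(r / 2) * g x ^ 2) := integral_const_mul _ _
    _ ≤ C * √(π / (r / 2)) := by
        gcongr
        exact setIntegral_abs_deriv_mul_exp_neg_mul_sq_le hr2 hS hg hinj
    _ = C * √(2 * π) / √r := by
        rw [div_div_eq_mul_div, mul_comm π, sqrt_div (by positivity), mul_div_assoc]

lemma le_setIntegral_mul_exp_neg_mul_sq (hr : 1 ≤ r) (hS : MeasurableSet S)
    (hint : IntegrableOn (fun x ↦ A x * exp (-r * g x ^ 2)) S) (hA : ∀ x ∈ S, 0 ≤ A x)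
    (hsub : Icc x₀ (x₀ + 1) ⊆ S) (hcA : ∀ x ∈ Icc x₀ (x₀ + 1), c ≤ A x)
    (hgL : ∀ x ∈ Icc x₀ (x₀ + 1), |g x| ≤ L * (x - x₀)) :
    c * exp (-L ^ 2) / √r ≤ ∫ x in S, A x * exp (-r * g x ^ 2) := by
  have hr0 : 0 < r := by linarith
  set J := Icc x₀ (x₀ + 1 / √r)
  have hJ : J ⊆ Icc x₀ (x₀ + 1) :=
    Icc_subset_Icc_right (by gcongr; exact div_le_one_of_le₀ (one_le_sqrt.2 hr) (by positivity))
  have phase_le (x) (hx : x ∈ J) : r * g x ^ 2 ≤ L ^ 2 :=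
    calc r * g x ^ 2 ≤ r * (L * (x - x₀)) ^ 2 :=
          mul_le_mul_of_nonneg_left
            (sq_le_sq.2 ((hgL x (hJ hx)).trans (le_abs_self _))) hr0.le
      _ = r * L ^ 2 * (x - x₀) ^ 2 := by ring
      _ ≤ r * L ^ 2 * (1 / √r) ^ 2 := by
          have := hx.1
          gcongr
          linarith [hx.2]
      _ = L ^ 2 := by
          rw [div_pow, sq_sqrt hr0.le]
          field_simp
  have integrand_ge (x) (hx : x ∈ J) : c * exp (-L ^ 2) ≤ A x * exp (-r * g x ^ 2) := by
    gcongr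
    · exact hA x (hsub (hJ hx))
    · exact hcA x (hJ hx)
    · linarith [phase_le x hx]
  calc c * exp (-L ^ 2) / √r = c * exp (-L ^ 2) * volume.real J := by
        rw [volume_real_Icc_of_le (le_add_of_nonneg_right (by positivity)), add_sub_cancel_left,
          mul_one_div]
    _ ≤ ∫ x in J, A x * exp (-r * g x ^ 2) :=
        setIntegral_ge_of_const_le_real measurableSet_Icc measure_Icc_lt_top.ne integrand_ge
          (hint.mono_set (hJ.trans hsub))
    _ ≤ ∫ x in S, A x * exp (-r * g x ^ 2) :=
        setIntegral_mono_set hint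
          (ae_restrict_of_forall_mem hS fun x hx ↦ mul_nonneg (hA x hx) (exp_pos _).le)
          (hJ.trans hsub).eventuallyLE

end Laplace

section PhaseRoot

/-- The increasing square root `(a u - 1) / (2 √u)` of the phase `(a u - 1)² / (4 u)`, which
governs the decay of the heat kernel at time `t = r u` once `exp (-a r)` is factored out. -/
noncomputable def phaseRoot (a u : ℝ) : ℝ := (a * u - 1) / (2 * √u)

variable {a u : ℝ}

lemma phaseRoot_sq (hu : 0 < u) : phaseRoot a u ^ 2 = (a * u - 1) ^ 2 / (4 * u) := by
  rw [phaseRoot, div_pow, mul_pow, sq_sqrt hu.le]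
  norm_num

lemma hasDerivAt_phaseRoot (a : ℝ) (hu : 0 < u) :
    HasDerivAt (phaseRoot a) ((a * u + 1) / (4 * (u * √u))) u := by
  have hnum : HasDerivAt (fun u ↦ a * u - 1) a u := by
    simpa using ((hasDerivAt_id u).const_mul a).sub_const 1
  have hden : HasDerivAt (fun u ↦ 2 * √u) (2 * (1 / (2 * √u))) u :=
    (hasDerivAt_sqrt hu.ne').const_mul 2
  refine (hnum.div hden (by positivity)).congr_deriv ?_
  field_simp
  rw [sq_sqrt hu.le]
  ring

lemma injOn_phaseRoot (ha : 0 ≤ a) : InjOn (phaseRoot a) (Ioi 0) := by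
  refine (strictMonoOn_of_deriv_pos (convex_Ioi 0) (fun u hu ↦
    (hasDerivAt_phaseRoot a hu).continuousAt.continuousWithinAt) fun u hu ↦ ?_).injOn
  rw [interior_Ioi, mem_Ioi] at hu
  rw [(hasDerivAt_phaseRoot a hu).deriv]
  positivity

lemma abs_phaseRoot_le (ha : 0 < a) (hu : 1 / a ≤ u) :
    |phaseRoot a u| ≤ a * √a / 2 * (u - 1 / a) := by
  have hu0 : 0 < u := lt_of_lt_of_le (by positivity) hu
  have one_le_mul : 1 ≤ a * u := by rwa [div_le_iff₀ ha, mul_comm] at hu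
  have inv_sqrt_le : 1 / √u ≤ √a := by
    rw [div_le_iff₀ (sqrt_pos.2 hu0), ← sqrt_mul ha.le]
    exact one_le_sqrt.2 one_le_mul
  calc |phaseRoot a u| = a / 2 * (u - 1 / a) * (1 / √u) := by
        rw [phaseRoot, abs_of_nonneg (div_nonneg (by linarith) (by positivity))]
        field_simp
    _ ≤ a / 2 * (u - 1 / a) * √a := by
        gcongr
    _ = a * √a / 2 * (u - 1 / a) := by ring

lemma exists_amplitude_mul_exp_neg_le_deriv_phaseRoot (ha : 0 < a) (b p : ℝ) :
    ∃ C ≥ 0, ∀ u > 0, u ^ b * (1 + u) ^ p * exp (-(phaseRoot a u ^ 2 / 2)) ≤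
      C * |(a * u + 1) / (4 * (u * √u))| := by
  obtain ⟨C, hC, hle⟩ := exists_rpow_mul_one_add_rpow_le_mul_exp
    (by positivity : 0 < a ^ 2 / 8) (by norm_num : (0 : ℝ) < 1 / 8) (b + 3 / 2) p
  refine ⟨4 * (C * exp (a / 4)), by positivity, fun u hu ↦ ?_⟩
  have mul_sqrt_eq : u * √u = u ^ (3 / 2 : ℝ) := by
    rw [sqrt_eq_rpow, ← rpow_one_add' hu.le (by norm_num)]
    norm_num
  have exponent_eq : a ^ 2 / 8 * u + 1 / 8 * u⁻¹ + -(phaseRoot a u ^ 2 / 2) = a / 4 := by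
    rw [phaseRoot_sq hu]
    field_simp
    ring
  have numerator_le : u ^ b * (1 + u) ^ p * exp (-(phaseRoot a u ^ 2 / 2)) * (u * √u) ≤
      C * exp (a / 4) :=
    calc _ = u ^ (b + 3 / 2) * (1 + u) ^ p * exp (-(phaseRoot a u ^ 2 / 2)) := by
          rw [mul_sqrt_eq, rpow_add hu]
          ring
      _ ≤ C * exp (a ^ 2 / 8 * u + 1 / 8 * u⁻¹) * exp (-(phaseRoot a u ^ 2 / 2)) :=
          mul_le_mul_of_nonneg_right (hle u hu) (exp_pos _).le
      _ = C * exp (a / 4) := by rw [mul_assoc, ← exp_add, exponent_eq]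
  have one_le_add : 1 ≤ a * u + 1 := le_add_of_nonneg_left (by positivity)
  calc u ^ b * (1 + u) ^ p * exp (-(phaseRoot a u ^ 2 / 2)) ≤ C * exp (a / 4) / (u * √u) :=
        (le_div_iff₀ (by positivity)).2 numerator_le
    _ ≤ C * exp (a / 4) * (a * u + 1) / (u * √u) := by
        exact div_le_div_of_nonneg_right
          (le_mul_of_one_le_right (by positivity) one_le_add) (by positivity)
    _ = 4 * (C * exp (a / 4)) * |(a * u + 1) / (4 * (u * √u))| := by
        rw [abs_of_pos (by positivity)]
        field_simp

/-- The Laplace-type integrand with amplitude `u ^ b * (1 + u) ^ p`, phase `phaseRoot a u ^ 2` and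
large parameter `r`, into which the integrand of `F` is turned by the substitution `t = r u`. -/
noncomputable def laplaceIntegrand (a b p r u : ℝ) : ℝ :=
  u ^ b * (1 + u) ^ p * exp (-r * phaseRoot a u ^ 2)

theorem exists_laplaceIntegrand_bounds (ha : 0 < a) (b p : ℝ) :
    ∃ c > 0, ∃ C > 0, ∀ r ≥ 1,
      IntegrableOn (laplaceIntegrand a b p r) (Ioi 0) ∧
      ∫ u in Ioi 0, laplaceIntegrand a b p r u ∈ Icc (c / √r) (C / √r) := by
  set A : ℝ → ℝ := fun u ↦ u ^ b * (1 + u) ^ p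
  have hsub : Icc (1 / a) (1 / a + 1) ⊆ Ioi 0 :=
    fun u hu ↦ lt_of_lt_of_le (by positivity) hu.1
  have A_pos : ∀ u ∈ Ioi (0 : ℝ), 0 < A u := fun u (hu : 0 < u) ↦ by positivity
  have A_cont : ContinuousOn A (Ioi 0) := fun u (hu : 0 < u) ↦
    ((continuousAt_rpow_const u b (.inl hu.ne')).mul
      ((continuousAt_const.add continuousAt_id).rpow_const
        (.inl (by positivity : 1 + u ≠ 0)))).continuousWithinAt
  have deriv_root : ∀ u ∈ Ioi (0 : ℝ), HasDerivWithinAt (phaseRoot a)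
      ((a * u + 1) / (4 * (u * √u))) (Ioi 0) u :=
    fun u hu ↦ (hasDerivAt_phaseRoot a hu).hasDerivWithinAt
  obtain ⟨u₀, hu₀, A_min⟩ := isCompact_Icc.exists_isMinOn
    (nonempty_Icc.2 (by linarith)) (A_cont.mono hsub)
  obtain ⟨C, hC, hdom⟩ := exists_amplitude_mul_exp_neg_le_deriv_phaseRoot ha b p
  have A_u₀_pos := A_pos u₀ (hsub hu₀)
  refine ⟨A u₀ * exp (-(a * √a / 2) ^ 2), by positivity, C * √(2 * π) + 1, by positivity,
    fun r hr ↦ ?_⟩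
  have hint := integrableOn_mul_exp_neg_mul_sq hr measurableSet_Ioi deriv_root
    (injOn_phaseRoot ha.le) A_cont (fun u hu ↦ (A_pos u hu).le) hdom
  refine ⟨hint, ⟨?_, ?_⟩⟩
  · exact le_setIntegral_mul_exp_neg_mul_sq hr measurableSet_Ioi hint
      (fun u hu ↦ (A_pos u hu).le) hsub A_min (fun u hu ↦ abs_phaseRoot_le ha hu.1)
  · refine (setIntegral_mul_exp_neg_mul_sq_le hr measurableSet_Ioi deriv_root
      (injOn_phaseRoot ha.le) hC (fun u hu ↦ (A_pos u hu).le) hdom).trans ?_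
    gcongr
    exact le_add_of_nonneg_right zero_le_one

end PhaseRoot

section GreenFunction

variable {N : ℕ} {r u : ℝ}

/-- The factor by which `(1 + r + t) ^ ((N - 3) / 2) * (1 + r)` at `t = r u` differs from its
leading behaviour `(r * (1 + u)) ^ ((N - 3) / 2) * r`. -/
noncomputable def hNCorrection (N : ℕ) (r u : ℝ) : ℝ :=
  ((1 + r + r * u) / (r * (1 + u))) ^ (((N : ℝ) - 3) / 2) * ((1 + r) / r)

lemma hNCorrection_mem_Icc (hr : 1 ≤ r) (hu : 0 < u) :
    hNCorrection N r u ∈ Icc (2 ^ (-|((N : ℝ) - 3) / 2|)) (2 ^ |((N : ℝ) - 3) / 2| * 2) := by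
  have hr0 : 0 < r := by linarith
  have ru_pos : 0 < r * u := mul_pos hr0 hu
  have ratio_mem : (1 + r + r * u) / (r * (1 + u)) ∈ Icc 1 2 :=
    ⟨(one_le_div (by positivity)).2 (by linarith), (div_le_iff₀ (by positivity)).2 (by linarith)⟩
  have one_le : 1 ≤ (1 + r) / r := (one_le_div hr0).2 (by linarith)
  have le_two : (1 + r) / r ≤ 2 := (div_le_iff₀ hr0).2 (by linarith)
  obtain ⟨hlower, hupper⟩ := rpow_mem_Icc_rpow_abs ratio_mem (((N : ℝ) - 3) / 2)
  exact ⟨hlower.trans (le_mul_of_one_le_right (by positivity) one_le),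
    mul_le_mul hupper le_two (by positivity) (by positivity)⟩

lemma measurable_hNCorrection (N : ℕ) (r : ℝ) : Measurable (hNCorrection N r) := by
  unfold hNCorrection
  fun_prop

lemma hN_exponent_eq (hr : 0 < r) (hu : 0 < u) (a : ℝ) :
    -(a ^ 2 * (r * u)) / 4 - a * r / 2 - r ^ 2 / (4 * (r * u)) =
      -a * r + -r * phaseRoot a u ^ 2 := by
  rw [phaseRoot_sq hu]
  field_simp
  ring

lemma hN_mul_rpow_eq (N : ℕ) (s : ℝ) (hr : 0 < r) (hu : 0 < u) :
    r * (hN N (r * u) r * (r * u) ^ (s - 1)) =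
      (4 * π) ^ (-(N : ℝ) / 2) * exp (-((N : ℝ) - 1) * r) * r ^ (s - 1) * √r *
        (laplaceIntegrand (N - 1) (s - 1 - N / 2) ((N - 3) / 2) r u * hNCorrection N r u) := by
  have power_count : √r = r * r ^ (-(N : ℝ) / 2) * r ^ (((N : ℝ) - 3) / 2) * r := by
    nth_rewrite 2 5 [← rpow_one r]
    rw [sqrt_eq_rpow, ← rpow_add hr, ← rpow_add hr, ← rpow_add hr]
    ring_nf
  have amplitude_split : u ^ (s - 1 - (N : ℝ) / 2) = u ^ (-(N : ℝ) / 2) * u ^ (s - 1) := by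
    rw [← rpow_add hu]
    ring_nf
  rw [hN, hNCorrection, laplaceIntegrand, hN_exponent_eq hr hu, exp_add, amplitude_split,
    power_count, ← mul_assoc (4 * π), mul_rpow (by positivity) hu.le,
    mul_rpow (by positivity) hr.le, mul_rpow hr.le hu.le,
    div_rpow (by positivity) (by positivity), mul_rpow hr.le (by positivity)]
  field_simp

lemma F_eq_mul_integral_laplaceIntegrand (N : ℕ) (s : ℝ) (hr : 0 < r) :
    F N s r = (4 * π) ^ (-(N : ℝ) / 2) * exp (-((N : ℝ) - 1) * r) * r ^ (s - 1) * √r *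
      ∫ u in Ioi 0,
        laplaceIntegrand (N - 1) (s - 1 - N / 2) ((N - 3) / 2) r u * hNCorrection N r u := by
  have rescale := integral_comp_mul_left_Ioi (fun t ↦ hN N t r * t ^ (s - 1)) 0 hr
  rw [mul_zero, smul_eq_mul, eq_inv_mul_iff_mul_eq₀ hr.ne'] at rescale
  rw [F, ← rescale, ← integral_const_mul, ← integral_const_mul]
  exact setIntegral_congr_fun measurableSet_Ioi fun u hu ↦ hN_mul_rpow_eq N s hr hu

end GreenFunction

theorem F_long_distance_estimate_general (N : ℕ) (hN2 : 2 ≤ N) (s : ℝ) :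
    ∃ C₂ > (0 : ℝ), ∃ C₂' > (0 : ℝ), ∀ r : ℝ, 1 ≤ r →
      C₂ * Real.exp (-((N : ℝ) - 1) * r) * r ^ (s - 1) ≤ F N s r ∧
        F N s r ≤ C₂' * Real.exp (-((N : ℝ) - 1) * r) * r ^ (s - 1) := by
  have ha : (0 : ℝ) < N - 1 := sub_pos.2 (by exact_mod_cast hN2)
  set p : ℝ := (N - 3) / 2
  set Z : ℝ := (4 * π) ^ (-(N : ℝ) / 2)
  obtain ⟨c, hc, C, hC, laplace⟩ := exists_laplaceIntegrand_bounds ha (s - 1 - N / 2) p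
  refine ⟨Z * (2 ^ (-|p|) * c), by positivity, Z * (2 ^ |p| * 2 * C), by positivity, fun r hr ↦ ?_⟩
  have hr0 : 0 < r := by linarith
  obtain ⟨hint, hlower, hupper⟩ := laplace r hr
  obtain ⟨hweight_lower, hweight_upper⟩ := setIntegral_mul_mem_Icc measurableSet_Ioi hint
    (fun u (hu : 0 < u) ↦ by unfold laplaceIntegrand; positivity)
    (measurable_hNCorrection N r).aestronglyMeasurable fun u hu ↦ hNCorrection_mem_Icc hr hu
  have lower := (mul_le_mul_of_nonneg_left hlower (by positivity)).trans hweight_lower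
  have upper := hweight_upper.trans (mul_le_mul_of_nonneg_left hupper (by positivity))
  rw [F_eq_mul_integral_laplaceIntegrand N s hr0]
  constructor
  · calc Z * (2 ^ (-|p|) * c) * exp (-((N : ℝ) - 1) * r) * r ^ (s - 1)
        = Z * exp (-((N : ℝ) - 1) * r) * r ^ (s - 1) * √r * (2 ^ (-|p|) * (c / √r)) := by
          field_simp
      _ ≤ _ := mul_le_mul_of_nonneg_left lower (by positivity)
  · calc _ ≤ Z * exp (-((N : ℝ) - 1) * r) * r ^ (s - 1) * √r * (2 ^ |p| * 2 * (C / √r)) :=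
          mul_le_mul_of_nonneg_left upper (by positivity)
      _ = Z * (2 ^ |p| * 2 * C) * exp (-((N : ℝ) - 1) * r) * r ^ (s - 1) := by field_simp

theorem F_long_distance_estimate (N : ℕ) (hN3 : 3 ≤ N) (s : ℝ) (hs0 : 0 < s) (hs1 : s < 1) :
    ∃ R₂ > (0 : ℝ), ∃ C₂ > (0 : ℝ), ∃ C₂' > (0 : ℝ),
      ∀ r : ℝ, R₂ ≤ r →
        C₂ * Real.exp (-((N : ℝ) - 1) * r) * r ^ (s - 1) ≤ F N s r ∧
          F N s r ≤ C₂' * Real.exp (-((N : ℝ) - 1) * r) * r ^ (s - 1) :=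
  ⟨1, one_pos, F_long_distance_estimate_general N (by omega) s⟩
end

section
/- (Global upper bound for the Green function.) For every integer N ≥ 3 and every s with 0 < s < 1, there exists a constant C₅ > 0, depending only on N and s, such that F_{N,s}(r) ≤ C₅ · r^{-(N-2s)} for all r > 0. -/
open Real MeasureTheory Set Filter

/-!
The spectral gap factor `exp (-(N-1)²t/4 - (N-1)r/2)` absorbs the polynomial factor
`(1+r+t)^((N-3)/2) (1+r)`, because `1 + x ≤ 2 exp (x/2)`. Hence `h_N` is at most a
constant times the heat kernel of `ℝ^N`, whose integral against `t^(s-1)` is, after `t ↦ 1/t`, a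
Gamma integral: it equals `Γ(N/2-s) / (4^s π^(N/2)) · r^(2s-N)`, a multiple of the Riesz kernel.
-/

lemma one_add_rpow_le_two_rpow_mul_exp {x d : ℝ} (hx : -1 ≤ x) (hd : 0 ≤ d) :
    (1 + x) ^ d ≤ 2 ^ d * exp (d * x / 2) := by
  have hbase : 1 + x ≤ 2 * exp (x / 2) := by linarith [add_one_le_exp (x / 2)]
  calc (1 + x) ^ d ≤ (2 * exp (x / 2)) ^ d := rpow_le_rpow (by linarith) hbase hd
    _ = 2 ^ d * exp (d * x / 2) := by
      rw [mul_rpow (by norm_num) (exp_pos _).le, ← exp_mul]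
      ring_nf

lemma integral_rpow_neg_sub_one_mul_exp_neg_div {a b : ℝ} (ha : 0 < a) (hb : 0 < b) :
    ∫ t in Ioi (0 : ℝ), t ^ (-a - 1) * exp (-(b / t)) = (1 / b) ^ a * Gamma a := by
  have hsubst : ∀ t ∈ Ioi (0 : ℝ), t ^ (-a - 1) * exp (-(b / t)) =
      (|(-1 : ℝ)| * t ^ (-1 - 1 : ℝ)) •
        ((t ^ (-1 : ℝ)) ^ (a - 1) * exp (-(b * t ^ (-1 : ℝ)))) := fun t (ht : 0 < t) ↦ by
    have hpow : t ^ (-a - 1) = t ^ (-1 - 1 : ℝ) * (t ^ (-1 : ℝ)) ^ (a - 1) := by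
      rw [← rpow_mul ht.le, ← rpow_add ht]
      ring_nf
    rw [hpow, abs_neg, abs_one, one_mul, smul_eq_mul, mul_assoc, rpow_neg_one, div_eq_mul_inv]
  rw [setIntegral_congr_fun measurableSet_Ioi hsubst,
    integral_comp_rpow_Ioi (fun u : ℝ ↦ u ^ (a - 1) * exp (-(b * u))) (by norm_num),
    integral_rpow_mul_exp_neg_mul_Ioi ha hb]

/-- The heat kernel of `ℝ^N` at distance `r`, the comparison function for `hN`. -/
noncomputable def euclideanHeatKernel (N : ℕ) (t r : ℝ) : ℝ :=
  (4 * π * t) ^ (-(N : ℝ) / 2) * exp (-(r ^ 2 / (4 * t)))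

section Riesz

variable {N : ℕ} {s r : ℝ}

lemma euclideanHeatKernel_mul_rpow_eq {t : ℝ} (ht : 0 < t) :
    euclideanHeatKernel N t r * t ^ (s - 1) =
      (4 * π) ^ (-(N : ℝ) / 2) * (t ^ (-((N : ℝ) / 2 - s) - 1) * exp (-(r ^ 2 / 4 / t))) := by
  have hpow : t ^ (-((N : ℝ) / 2 - s) - 1) = t ^ (-(N : ℝ) / 2) * t ^ (s - 1) := by
    rw [← rpow_add ht]
    ring_nf
  rw [euclideanHeatKernel, mul_rpow (by positivity) ht.le, hpow, div_div]
  ring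

lemma integral_euclideanHeatKernel_mul_rpow (hs : s < N / 2) (hr : 0 < r) :
    ∫ t in Ioi (0 : ℝ), euclideanHeatKernel N t r * t ^ (s - 1) =
      Gamma (N / 2 - s) / (4 ^ s * π ^ ((N : ℝ) / 2)) * r ^ (-((N : ℝ) - 2 * s)) := by
  have hscale : (1 / (r ^ 2 / 4)) ^ ((N : ℝ) / 2 - s) =
      4 ^ ((N : ℝ) / 2 - s) * r ^ (-((N : ℝ) - 2 * s)) := by
    rw [one_div_div, div_rpow (by norm_num) (by positivity), ← rpow_natCast_mul hr.le,
      div_eq_mul_inv, ← rpow_neg hr.le]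
    ring_nf
  rw [setIntegral_congr_fun measurableSet_Ioi fun t ht ↦ euclideanHeatKernel_mul_rpow_eq ht,
    integral_const_mul, integral_rpow_neg_sub_one_mul_exp_neg_div (sub_pos.2 hs) (by positivity),
    hscale, neg_div, rpow_neg (by positivity), mul_rpow (by norm_num) pi_pos.le,
    rpow_sub (by norm_num)]
  field_simp

lemma integrableOn_euclideanHeatKernel_mul_rpow (hs : s < N / 2) (hr : 0 < r) :
    IntegrableOn (fun t ↦ euclideanHeatKernel N t r * t ^ (s - 1)) (Ioi 0) := by
  refine .of_integral_ne_zero ?_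
  rw [integral_euclideanHeatKernel_mul_rpow hs hr]
  exact mul_ne_zero (div_ne_zero (Gamma_pos_of_pos (sub_pos.2 hs)).ne' (by positivity))
    (by positivity)

end Riesz

section Comparison

variable {N : ℕ} {s t r : ℝ}

lemma one_add_add_rpow_mul_one_add_le (hN1 : 1 ≤ N) (ht : 0 ≤ t) (hr : 0 ≤ r) :
    (1 + r + t) ^ (((N : ℝ) - 3) / 2) * (1 + r) ≤
      2 ^ (((N : ℝ) - 1) / 2) * exp (((N : ℝ) - 1) ^ 2 * t / 4 + ((N : ℝ) - 1) * r / 2) := by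
  obtain ⟨d, rfl⟩ := Nat.exists_eq_add_of_le' hN1
  have hd : (d : ℝ) ≤ d ^ 2 := by exact_mod_cast Nat.le_self_pow two_ne_zero d
  push_cast
  simp only [add_sub_cancel_right]
  calc (1 + r + t) ^ (((d : ℝ) + 1 - 3) / 2) * (1 + r)
      ≤ (1 + r + t) ^ (((d : ℝ) + 1 - 3) / 2) * (1 + r + t) := by
        exact mul_le_mul_of_nonneg_left (by linarith) (by positivity)
    _ = (1 + (r + t)) ^ ((d : ℝ) / 2) := by
        rw [← rpow_add_one (by positivity)]
        ring_nf
    _ ≤ 2 ^ ((d : ℝ) / 2) * exp (d / 2 * (r + t) / 2) :=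
        one_add_rpow_le_two_rpow_mul_exp (by linarith) (by positivity)
    _ ≤ 2 ^ ((d : ℝ) / 2) * exp (d ^ 2 * t / 4 + d * r / 2) := by
        gcongr
        nlinarith [mul_le_mul_of_nonneg_right hd ht, mul_nonneg d.cast_nonneg hr]

lemma hN_nonneg (ht : 0 ≤ t) (hr : 0 ≤ r) : 0 ≤ hN N t r := by
  unfold hN
  positivity

lemma hN_le_two_rpow_mul_euclideanHeatKernel (hN1 : 1 ≤ N) (ht : 0 ≤ t) (hr : 0 ≤ r) :
    hN N t r ≤ 2 ^ (((N : ℝ) - 1) / 2) * euclideanHeatKernel N t r := by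
  have hexp : exp (-(((N : ℝ) - 1) ^ 2 * t) / 4 - ((N : ℝ) - 1) * r / 2 - r ^ 2 / (4 * t)) =
      exp (-(r ^ 2 / (4 * t))) /
        exp (((N : ℝ) - 1) ^ 2 * t / 4 + ((N : ℝ) - 1) * r / 2) := by
    rw [← exp_sub]
    ring_nf
  calc hN N t r
      = euclideanHeatKernel N t r * ((1 + r + t) ^ (((N : ℝ) - 3) / 2) * (1 + r) /
          exp (((N : ℝ) - 1) ^ 2 * t / 4 + ((N : ℝ) - 1) * r / 2)) := by
        rw [hN, hexp, euclideanHeatKernel]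
        ring
    _ ≤ euclideanHeatKernel N t r * 2 ^ (((N : ℝ) - 1) / 2) := by
        refine mul_le_mul_of_nonneg_left ?_ (by unfold euclideanHeatKernel; positivity)
        exact (div_le_iff₀ (exp_pos _)).2 (one_add_add_rpow_mul_one_add_le hN1 ht hr)
    _ = 2 ^ (((N : ℝ) - 1) / 2) * euclideanHeatKernel N t r := mul_comm _ _

lemma hN_mul_rpow_le_two_rpow_mul_euclideanHeatKernel_mul_rpow (hN1 : 1 ≤ N) (ht : 0 ≤ t)
    (hr : 0 ≤ r) :
    hN N t r * t ^ (s - 1) ≤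
      2 ^ (((N : ℝ) - 1) / 2) * (euclideanHeatKernel N t r * t ^ (s - 1)) := by
  rw [← mul_assoc]
  exact mul_le_mul_of_nonneg_right (hN_le_two_rpow_mul_euclideanHeatKernel hN1 ht hr)
    (by positivity)

lemma integrableOn_hN_mul_rpow (hN1 : 1 ≤ N) (hs : s < N / 2) (hr : 0 < r) :
    IntegrableOn (fun t ↦ hN N t r * t ^ (s - 1)) (Ioi 0) := by
  refine ((integrableOn_euclideanHeatKernel_mul_rpow hs hr).const_mul
    (2 ^ (((N : ℝ) - 1) / 2))).mono' (by unfold hN; fun_prop) ?_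
  filter_upwards [ae_restrict_mem measurableSet_Ioi] with t (ht : 0 < t)
  rw [norm_of_nonneg (mul_nonneg (hN_nonneg ht.le hr.le) (by positivity))]
  exact hN_mul_rpow_le_two_rpow_mul_euclideanHeatKernel_mul_rpow hN1 ht.le hr.le

end Comparison

theorem F_global_upper_bound_general {N : ℕ} (hN1 : 1 ≤ N) {s : ℝ} (hs : s < N / 2) {r : ℝ}
    (hr : 0 < r) :
    F N s r ≤ 2 ^ (((N : ℝ) - 1) / 2) * (Gamma (N / 2 - s) / (4 ^ s * π ^ ((N : ℝ) / 2))) *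
      r ^ (-((N : ℝ) - 2 * s)) := by
  calc F N s r
      ≤ ∫ t in Ioi (0 : ℝ),
          2 ^ (((N : ℝ) - 1) / 2) * (euclideanHeatKernel N t r * t ^ (s - 1)) := by
        refine setIntegral_mono_on (integrableOn_hN_mul_rpow hN1 hs hr)
          ((integrableOn_euclideanHeatKernel_mul_rpow hs hr).const_mul _) measurableSet_Ioi
          fun t (ht : 0 < t) ↦ ?_
        exact hN_mul_rpow_le_two_rpow_mul_euclideanHeatKernel_mul_rpow hN1 ht.le hr.le
    _ = _ := by
        rw [integral_const_mul, integral_euclideanHeatKernel_mul_rpow hs hr, mul_assoc]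

theorem F_global_upper_bound (N : ℕ) (hN3 : 3 ≤ N) (s : ℝ) (hs0 : 0 < s) (hs1 : s < 1) :
    ∃ C₅ > (0 : ℝ), ∀ r : ℝ, 0 < r → F N s r ≤ C₅ * r ^ (-((N : ℝ) - 2 * s)) := by
  have hN3' : (3 : ℝ) ≤ N := by exact_mod_cast hN3
  have hs : s < N / 2 := by linarith
  exact ⟨2 ^ (((N : ℝ) - 1) / 2) * (Gamma (N / 2 - s) / (4 ^ s * π ^ ((N : ℝ) / 2))),
    mul_pos (by positivity) (div_pos (Gamma_pos_of_pos (sub_pos.2 hs)) (by positivity)),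
    fun r hr ↦ F_global_upper_bound_general (by lia) hs hr⟩
end

section
/- (Exact short-distance asymptotics.) For every integer N ≥ 3 and every s with 0 < s < 1, the limit as r → 0⁺ of r^{N-2s} · F_{N,s}(r) exists and equals Γ(N/2 − s) / (4^{s} π^{N/2}), where Γ denotes the Euler Gamma function. -/
open Real MeasureTheory Set Filter

/-!
The kernel `hN` is the Euclidean heat kernel times a factor that is bounded for small `r` and tends
to `1` as `(r, t) → (0, 0)`. The dilation `t = r² u` turns `r ^ (N - 2 s) * F N s r` into the
integral of a fixed integrable profile against that factor evaluated at `(r, r² u)`; dominated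
convergence replaces the factor by `1`, and `u ↦ u⁻¹` makes the remaining integral a Gamma integral.
-/

open scoped Topology

section InverseGamma

variable {a b : ℝ}

theorem integral_rpow_mul_exp_neg_div_Ioi (ha : 0 < a) (hb : 0 < b) :
    ∫ u in Ioi (0 : ℝ), u ^ (-1 - a) * exp (-(b / u)) = b ^ (-a) * Gamma a := by
  have inversion : ∀ u ∈ Ioi (0 : ℝ), (|(-1 : ℝ)| * u ^ ((-1 : ℝ) - 1)) •
      ((u ^ (-1 : ℝ)) ^ (a - 1) * exp (-(b * u ^ (-1 : ℝ)))) = u ^ (-1 - a) * exp (-(b / u)) := by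
    intro u (hu : 0 < u)
    rw [abs_neg, abs_one, one_mul, smul_eq_mul, ← mul_assoc, ← rpow_mul hu.le, ← rpow_add hu,
      rpow_neg_one, div_eq_mul_inv]
    ring_nf
  rw [← setIntegral_congr_fun measurableSet_Ioi inversion,
    integral_comp_rpow_Ioi (fun v => v ^ (a - 1) * exp (-(b * v))) (by norm_num),
    integral_rpow_mul_exp_neg_mul_Ioi ha hb, one_div, inv_rpow hb.le, rpow_neg hb.le]

theorem integrableOn_rpow_mul_exp_neg_div_Ioi (ha : 0 < a) (hb : 0 < b) :
    IntegrableOn (fun u : ℝ => u ^ (-1 - a) * exp (-(b / u))) (Ioi 0) :=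
  Integrable.of_integral_ne_zero <| by
    rw [integral_rpow_mul_exp_neg_div_Ioi ha hb]
    exact (mul_pos (rpow_pos_of_pos hb _) (Gamma_pos_of_pos ha)).ne'

end InverseGamma

section Dilation

theorem rpow_mul_integral_rpow_mul_exp_neg_div_dilation {ε : ℝ} (hε : 0 < ε) (a b : ℝ)
    (g : ℝ → ℝ) :
    ε ^ a * ∫ t in Ioi (0 : ℝ), t ^ (-1 - a) * exp (-(b * ε / t)) * g t =
      ∫ u in Ioi (0 : ℝ), u ^ (-1 - a) * exp (-(b / u)) * g (ε * u) := by
  have substitution :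
      ∫ t in Ioi (0 : ℝ), t ^ (-1 - a) * exp (-(b * ε / t)) * g t =
        ε * ∫ u in Ioi (0 : ℝ), (ε * u) ^ (-1 - a) * exp (-(b * ε / (ε * u))) * g (ε * u) := by
    rw [integral_comp_mul_left_Ioi (fun t => t ^ (-1 - a) * exp (-(b * ε / t)) * g t) 0 hε,
      mul_zero, smul_eq_mul, mul_inv_cancel_left₀ hε.ne']
  have homogeneity : ε ^ a * ε * ε ^ (-1 - a) = 1 := by
    rw [← rpow_add_one hε.ne', ← rpow_add hε, ← rpow_zero ε]
    ring_nf
  rw [substitution, ← mul_assoc, ← integral_const_mul]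
  refine setIntegral_congr_fun measurableSet_Ioi fun u (hu : 0 < u) => ?_
  have exponent : b * ε / (ε * u) = b / u := by field_simp
  simp only [exponent, mul_rpow hε.le hu.le]
  linear_combination (u ^ (-1 - a) * exp (-(b / u)) * g (ε * u)) * homogeneity

variable {ι : Type*} {l : Filter ι} [l.IsCountablyGenerated] {w : ι → ℝ → ℝ} {ε : ι → ℝ} {c C : ℝ}

theorem tendsto_integral_Ioi_mul_comp_dilation {f : ℝ → ℝ} (hf : IntegrableOn f (Ioi 0))
    (hε : Tendsto ε l (𝓝[>] 0)) (hw_meas : ∀ i, Measurable (w i))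
    (hw_bound : ∀ᶠ i in l, ∀ t > 0, |w i t| ≤ C)
    (hw_lim : Tendsto (Function.uncurry w) (l ×ˢ 𝓝[>] 0) (𝓝 c)) :
    Tendsto (fun i => ∫ u in Ioi (0 : ℝ), f u * w i (ε i * u)) l
      (𝓝 ((∫ u in Ioi (0 : ℝ), f u) * c)) := by
  have hε_pos : ∀ᶠ i in l, 0 < ε i := hε.eventually self_mem_nhdsWithin
  rw [← integral_mul_const]
  refine tendsto_integral_filter_of_dominated_convergence (fun u => |f u| * C) ?_ ?_
    (hf.abs.mul_const C) ?_
  · exact .of_forall fun i => hf.aestronglyMeasurable.mul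
      ((hw_meas i).comp (measurable_const_mul (ε i))).aestronglyMeasurable
  · filter_upwards [hε_pos, hw_bound] with i hi hbound
    filter_upwards [ae_restrict_mem measurableSet_Ioi] with u (hu : 0 < u)
    rw [norm_eq_abs, abs_mul]
    exact mul_le_mul_of_nonneg_left (hbound _ (mul_pos hi hu)) (abs_nonneg _)
  · filter_upwards [ae_restrict_mem measurableSet_Ioi] with u (hu : 0 < u)
    have hεu : Tendsto (fun i => ε i * u) l (𝓝[>] 0) := by
      refine tendsto_nhdsWithin_iff.2 ⟨?_, hε_pos.mono fun i hi => mul_pos hi hu⟩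
      simpa only [zero_mul] using (tendsto_nhdsWithin_iff.1 hε).1.mul_const u
    exact (hw_lim.comp (tendsto_id.prodMk hεu)).const_mul (f u)

theorem tendsto_rpow_mul_integral_rpow_mul_exp_neg_div {a b : ℝ} (ha : 0 < a) (hb : 0 < b)
    (hε : Tendsto ε l (𝓝[>] 0)) (hw_meas : ∀ i, Measurable (w i))
    (hw_bound : ∀ᶠ i in l, ∀ t > 0, |w i t| ≤ C)
    (hw_lim : Tendsto (Function.uncurry w) (l ×ˢ 𝓝[>] 0) (𝓝 c)) :
    Tendsto (fun i => ε i ^ a * ∫ t in Ioi (0 : ℝ), t ^ (-1 - a) * exp (-(b * ε i / t)) * w i t) l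
      (𝓝 (b ^ (-a) * Gamma a * c)) := by
  rw [← integral_rpow_mul_exp_neg_div_Ioi ha hb]
  refine (tendsto_integral_Ioi_mul_comp_dilation (integrableOn_rpow_mul_exp_neg_div_Ioi ha hb)
    hε hw_meas hw_bound hw_lim).congr' ?_
  filter_upwards [hε.eventually self_mem_nhdsWithin] with i hi
  exact (rpow_mul_integral_rpow_mul_exp_neg_div_dilation hi a b (w i)).symm

end Dilation

/-- The ratio of `hN` to the Euclidean heat kernel `(4πt)^{-n/2} e^{-r²/(4t)}`, which carries the
effect of the curvature. The dimension `n` may be any real number, and `r` precedes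
`t` because the factor is integrated in `t` with `r` as a parameter. -/
noncomputable def curvatureFactor (n r t : ℝ) : ℝ :=
  exp (-((n - 1) ^ 2 * t) / 4 - (n - 1) * r / 2) * (1 + r + t) ^ ((n - 3) / 2) * (1 + r)

theorem measurable_curvatureFactor (n r : ℝ) : Measurable (curvatureFactor n r) := by
  unfold curvatureFactor
  fun_prop

theorem tendsto_curvatureFactor_zero (n : ℝ) :
    Tendsto (Function.uncurry (curvatureFactor n)) (𝓝 (0, 0)) (𝓝 1) := by
  have continuousAt_zero : ContinuousAt (Function.uncurry (curvatureFactor n)) (0, 0) := by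
    unfold Function.uncurry curvatureFactor
    exact .mul (.mul (by fun_prop) (.rpow_const (by fun_prop) (.inl (by norm_num)))) (by fun_prop)
  simpa [ContinuousAt, curvatureFactor] using continuousAt_zero

theorem one_add_add_rpow_le {r t : ℝ} (p : ℝ) (hr : r ∈ Icc 0 1) (ht : 0 ≤ t) :
    (1 + r + t) ^ p ≤ 2 ^ max p 0 * exp (t / 2 * max p 0) := by
  obtain ⟨hr0, hr1⟩ := hr
  calc (1 + r + t) ^ p ≤ (1 + r + t) ^ max p 0 :=
        rpow_le_rpow_of_exponent_le (by linarith) (le_max_left p 0)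
    _ ≤ (2 * exp (t / 2)) ^ max p 0 :=
        rpow_le_rpow (by linarith) (by linarith [add_one_le_exp (t / 2)]) (le_max_right p 0)
    _ = 2 ^ max p 0 * exp (t / 2 * max p 0) := by
        rw [mul_rpow zero_le_two (exp_pos _).le, exp_mul]

theorem abs_curvatureFactor_le {r t : ℝ} (n : ℝ) (hr : r ∈ Icc 0 1) (ht : 0 ≤ t) :
    |curvatureFactor n r t| ≤ 2 ^ max ((n - 3) / 2) 0 * exp (|n - 1| / 2) * 2 := by
  set p := max ((n - 3) / 2) 0
  have growth_le_decay : t / 2 * p ≤ (n - 1) ^ 2 * t / 4 := by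
    have hp : p ≤ (n - 1) ^ 2 / 2 :=
      max_le (by nlinarith [sq_nonneg (n - 2)]) (by positivity)
    nlinarith
  have drift : -((n - 1) * r) ≤ |n - 1| :=
    calc -((n - 1) * r) ≤ |(n - 1) * r| := neg_le_abs _
      _ = |n - 1| * r := by rw [abs_mul, abs_of_nonneg hr.1]
      _ ≤ |n - 1| := mul_le_of_le_one_right (abs_nonneg _) hr.2
  obtain ⟨hr0, hr1⟩ := hr
  rw [curvatureFactor, abs_of_nonneg (by positivity)]
  refine mul_le_mul ?_ (by linarith) (by linarith) (by positivity)
  calc exp (-((n - 1) ^ 2 * t) / 4 - (n - 1) * r / 2) * (1 + r + t) ^ ((n - 3) / 2)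
      ≤ exp (-((n - 1) ^ 2 * t) / 4 - (n - 1) * r / 2) * (2 ^ p * exp (t / 2 * p)) :=
        mul_le_mul_of_nonneg_left (one_add_add_rpow_le _ ⟨hr0, hr1⟩ ht) (exp_pos _).le
    _ = 2 ^ p * exp (-((n - 1) ^ 2 * t) / 4 - (n - 1) * r / 2 + t / 2 * p) := by
        rw [exp_add]
        ring
    _ ≤ 2 ^ p * exp (|n - 1| / 2) := by
        gcongr
        linarith

theorem hN_eq_mul_curvatureFactor (N : ℕ) (t r : ℝ) :
    hN N t r =
      (4 * π * t) ^ (-(N : ℝ) / 2) * exp (-(r ^ 2 / (4 * t))) * curvatureFactor N r t := by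
  rw [hN, curvatureFactor, sub_eq_add_neg (_ - _) (r ^ 2 / (4 * t)), exp_add]
  ring

theorem F_eq_integral_curvatureFactor (N : ℕ) (s r : ℝ) :
    F N s r = (4 * π) ^ (-(N : ℝ) / 2) * ∫ t in Ioi (0 : ℝ),
      t ^ (-1 - ((N : ℝ) / 2 - s)) * exp (-(1 / 4 * r ^ 2 / t)) * curvatureFactor N r t := by
  rw [F, ← integral_const_mul]
  refine setIntegral_congr_fun measurableSet_Ioi fun t (ht : 0 < t) => ?_
  have powers : t ^ (-1 - ((N : ℝ) / 2 - s)) = t ^ (-(N : ℝ) / 2) * t ^ (s - 1) := by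
    rw [← rpow_add ht]
    ring_nf
  have exponent : 1 / 4 * r ^ 2 / t = r ^ 2 / (4 * t) := by ring
  simp only [hN_eq_mul_curvatureFactor, mul_rpow (by positivity : 0 ≤ 4 * π) ht.le, powers,
    exponent]
  ring

theorem rpow_mul_F_eq (N : ℕ) (s : ℝ) {r : ℝ} (hr : 0 ≤ r) :
    r ^ ((N : ℝ) - 2 * s) * F N s r = (4 * π) ^ (-(N : ℝ) / 2) *
      ((r ^ 2) ^ ((N : ℝ) / 2 - s) * ∫ t in Ioi (0 : ℝ),
        t ^ (-1 - ((N : ℝ) / 2 - s)) * exp (-(1 / 4 * r ^ 2 / t)) * curvatureFactor N r t) := by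
  have powers : (r ^ 2) ^ ((N : ℝ) / 2 - s) = r ^ ((N : ℝ) - 2 * s) := by
    rw [← rpow_natCast_mul hr]
    push_cast
    ring_nf
  rw [F_eq_integral_curvatureFactor, powers, mul_left_comm]

theorem four_mul_pi_rpow_mul_one_div_four_rpow (n s : ℝ) :
    (4 * π) ^ (-n / 2) * (1 / 4) ^ (-(n / 2 - s)) = (4 ^ s * π ^ (n / 2))⁻¹ := by
  rw [mul_rpow zero_le_four pi_pos.le, one_div, inv_rpow zero_le_four, rpow_neg zero_le_four,
    inv_inv, rpow_sub four_pos, neg_div, rpow_neg zero_le_four, rpow_neg pi_pos.le]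
  field_simp

theorem tendsto_sq_nhdsGT_zero : Tendsto (fun r : ℝ => r ^ 2) (𝓝[>] 0) (𝓝[>] 0) := by
  refine tendsto_nhdsWithin_iff.2 ⟨?_, ?_⟩
  · exact ((continuous_pow 2).tendsto' 0 0 (zero_pow two_ne_zero)).mono_left nhdsWithin_le_nhds
  · filter_upwards [self_mem_nhdsWithin] with r (hr : 0 < r) using pow_pos hr 2

theorem F_short_distance_asymptotics_general (N : ℕ) (s : ℝ) (hs : s < (N : ℝ) / 2) :
    Tendsto (fun r : ℝ => r ^ ((N : ℝ) - 2 * s) * F N s r) (nhdsWithin 0 (Ioi 0))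
      (nhds (Real.Gamma ((N : ℝ) / 2 - s) / ((4 : ℝ) ^ s * π ^ ((N : ℝ) / 2)))) := by
  have factor_bound : ∀ᶠ r in 𝓝[>] (0 : ℝ), ∀ t > 0, |curvatureFactor N r t| ≤
      2 ^ max (((N : ℝ) - 3) / 2) 0 * exp (|(N : ℝ) - 1| / 2) * 2 := by
    filter_upwards [Ioo_mem_nhdsGT zero_lt_one] with r hr t ht
    exact abs_curvatureFactor_le N (Ioo_subset_Icc_self hr) ht.le
  have factor_lim : Tendsto (Function.uncurry (curvatureFactor N)) (𝓝[>] 0 ×ˢ 𝓝[>] 0) (𝓝 1) :=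
    (tendsto_curvatureFactor_zero N).mono_left <|
      (Filter.prod_mono nhdsWithin_le_nhds nhdsWithin_le_nhds).trans_eq nhds_prod_eq.symm
  rw [div_eq_inv_mul, ← four_mul_pi_rpow_mul_one_div_four_rpow, mul_assoc, ← mul_one (_ * Gamma _)]
  refine ((tendsto_rpow_mul_integral_rpow_mul_exp_neg_div (sub_pos.2 hs) (by norm_num)
    tendsto_sq_nhdsGT_zero (measurable_curvatureFactor N) factor_bound factor_lim).const_mul
      _).congr' ?_
  filter_upwards [self_mem_nhdsWithin] with r (hr : 0 < r) using (rpow_mul_F_eq N s hr.le).symm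

theorem F_short_distance_asymptotics (N : ℕ) (hN3 : 3 ≤ N) (s : ℝ) (hs0 : 0 < s) (hs1 : s < 1) :
    Tendsto (fun r : ℝ => r ^ ((N : ℝ) - 2 * s) * F N s r) (nhdsWithin 0 (Ioi 0))
      (nhds (Real.Gamma ((N : ℝ) / 2 - s) / ((4 : ℝ) ^ s * π ^ ((N : ℝ) / 2)))) :=
  have three_le : (3 : ℝ) ≤ N := mod_cast hN3
  F_short_distance_asymptotics_general N s (by linarith)
end
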